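/- The value 4(1+√2) is the greatest element of the set of values f(r,u,s,v) over all pairs of extremal three-outcome qubit POVM Bloch data (r,u), (s,v) whose unit vectors all lie in the plane {x ∈ ℝ³ : x₃ = 0}: one has f(r,u,s,v) ≤ 4(1+√2) for all such data, with equality attained (for instance by two orthogonal two-outcome projective measurements, i.e. r = s = (1,1,0), u₁ = −u₀, v₁ = −v₀ with u₀ ⟂ v₀). -/

import Mathlib

/-!
Put `aᵢ = rᵢuᵢ` and `bⱼ = sⱼvⱼ`. Since the `aᵢ` sum to zero and their lengths sum to `2`, each
length is at most `1` (`IsExtremalPOVMBloch.le_one`). For `0 ≤ r, s ≤ 1` the decomposition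
`r u + s v = rs (u + v) + r(1-s) u + (1-r)s v` and the triangle inequality give
`‖r u + s v‖ ≤ rs ‖u + v‖ + r(1-s) + (1-r)s`; the last two terms sum to `4` over all pairs.
For unit vectors, AM-GM gives `‖u + v‖ ≤ (‖u + v‖² + 2) / (2√2) = √2 + (√2/2) ⟪u, v⟫`, and weighted
by `rᵢsⱼ` this sums to `4√2` because `∑ rᵢuᵢ = 0`. The argument works in any dimension; two
orthogonal projective measurements in the plane attain the bound.
-/

/-- Bloch data of an extremal three-outcome qubit POVM: nonnegative weights summing
to `2` and unit vectors in `ℝ³` with vanishing weighted sum. -/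
def IsExtremalPOVMBloch (r : Fin 3 → ℝ) (u : Fin 3 → EuclideanSpace ℝ (Fin 3)) : Prop :=
  (∀ j, 0 ≤ r j) ∧ (∀ j, ‖u j‖ = 1) ∧ (∑ j, r j = 2) ∧ (∑ j, r j • u j = 0)

/-- The objective function `f(r,u,s,v) = Σᵢⱼ ‖rᵢuᵢ + sⱼvⱼ‖`. -/
noncomputable def blochF (r : Fin 3 → ℝ) (u : Fin 3 → EuclideanSpace ℝ (Fin 3))
    (s : Fin 3 → ℝ) (v : Fin 3 → EuclideanSpace ℝ (Fin 3)) : ℝ :=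
  ∑ i : Fin 3, ∑ j : Fin 3, ‖r i • u i + s j • v j‖

/-- Each weight is the length of minus the sum of the other two weighted vectors, hence at most
`2` minus itself. -/
lemma IsExtremalPOVMBloch.le_one {r : Fin 3 → ℝ} {u : Fin 3 → EuclideanSpace ℝ (Fin 3)}
    (h : IsExtremalPOVMBloch r u) (i : Fin 3) : r i ≤ 1 := by
  obtain ⟨h0, h1, h2, h3⟩ := h
  have hn : ∀ j, ‖r j • u j‖ = r j := fun j => by
    rw [norm_smul, h1, mul_one, Real.norm_of_nonneg (h0 j)]
  have e : r i • u i = -∑ j ∈ Finset.univ.erase i, r j • u j := by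
    rw [eq_neg_iff_add_eq_zero, Finset.add_sum_erase _ (fun j => r j • u j) (Finset.mem_univ i), h3]
  have hle : r i ≤ ∑ j ∈ Finset.univ.erase i, r j :=
    calc r i = ‖r i • u i‖ := (hn i).symm
      _ = ‖∑ j ∈ Finset.univ.erase i, r j • u j‖ := by rw [e, norm_neg]
      _ ≤ ∑ j ∈ Finset.univ.erase i, ‖r j • u j‖ := norm_sum_le _ _
      _ = ∑ j ∈ Finset.univ.erase i, r j := by simp only [hn]
  have := Finset.add_sum_erase Finset.univ r (Finset.mem_univ i)
  linarith

lemma norm_add_le_of_unit {E : Type*} [NormedAddCommGroup E] [InnerProductSpace ℝ E] {u v : E}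
    (hu : ‖u‖ = 1) (hv : ‖v‖ = 1) : ‖u + v‖ ≤ √2 + √2 / 2 * inner ℝ u v := by
  have hsq := norm_add_sq_real u v
  have h2 : √2 * √2 = 2 := Real.mul_self_sqrt (by norm_num)
  have hp : (0 : ℝ) < √2 := by positivity
  rw [hu, hv] at hsq
  have hi : inner ℝ u v = (‖u + v‖ ^ 2 - 2) / 2 := by linarith
  rw [hi]
  nlinarith [mul_nonneg hp.le (sq_nonneg (‖u + v‖ - √2))]

/-- The bound on a single term; its right-hand side is affine in `r` and `r • u` for fixed `s`
and `v`, and vice versa, so it can be summed using the POVM constraints alone. -/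
lemma norm_smul_add_smul_le {E : Type*} [NormedAddCommGroup E] [InnerProductSpace ℝ E] {u v : E}
    {r s : ℝ} (hu : ‖u‖ = 1) (hv : ‖v‖ = 1) (hr : 0 ≤ r) (hr' : r ≤ 1) (hs : 0 ≤ s)
    (hs' : s ≤ 1) :
    ‖r • u + s • v‖ ≤
      r * s * √2 + √2 / 2 * inner ℝ (r • u) (s • v) + (r * (1 - s) + (1 - r) * s) := by
  have e : r • u + s • v = (r * s) • (u + v) + (r * (1 - s)) • u + ((1 - r) * s) • v := by
    module
  have hrs := mul_nonneg hr hs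
  have h1 := mul_nonneg hr (sub_nonneg.2 hs')
  have h2 := mul_nonneg (sub_nonneg.2 hr') hs
  calc ‖r • u + s • v‖
      ≤ ‖(r * s) • (u + v)‖ + ‖(r * (1 - s)) • u‖ + ‖((1 - r) * s) • v‖ := by
        rw [e]; exact norm_add₃_le
    _ = r * s * ‖u + v‖ + (r * (1 - s) + (1 - r) * s) := by
        rw [norm_smul, norm_smul, norm_smul, hu, hv, Real.norm_of_nonneg hrs,
          Real.norm_of_nonneg h1, Real.norm_of_nonneg h2]
        ring
    _ ≤ r * s * (√2 + √2 / 2 * inner ℝ u v) + (r * (1 - s) + (1 - r) * s) := by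
        gcongr
        exact norm_add_le_of_unit hu hv
    _ = _ := by
        rw [real_inner_smul_left, real_inner_smul_right]
        ring

lemma blochF_le {r s : Fin 3 → ℝ} {u v : Fin 3 → EuclideanSpace ℝ (Fin 3)}
    (h : IsExtremalPOVMBloch r u) (k : IsExtremalPOVMBloch s v) :
    blochF r u s v ≤ 4 * (1 + √2) := by
  have hinner : ∑ i, ∑ j, inner ℝ (r i • u i) (s j • v j) = 0 := by
    simp_rw [← inner_sum, k.2.2.2, inner_zero_right, Finset.sum_const_zero]
  have hr := h.2.2.1
  have hs := k.2.2.1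
  calc blochF r u s v
      ≤ ∑ i, ∑ j, (r i * s j * √2 + √2 / 2 * inner ℝ (r i • u i) (s j • v j)
          + (r i * (1 - s j) + (1 - r i) * s j)) :=
        Finset.sum_le_sum fun i _ => Finset.sum_le_sum fun j _ =>
          norm_smul_add_smul_le (h.2.1 i) (k.2.1 j) (h.1 i) (h.le_one i) (k.1 j) (k.le_one j)
    _ = (∑ i, r i) * (∑ j, s j) * √2
          + √2 / 2 * ∑ i, ∑ j, inner ℝ (r i • u i) (s j • v j)
          + ((∑ i, r i) * (3 - ∑ j, s j) + (3 - ∑ i, r i) * ∑ j, s j) := by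
        simp only [Fin.sum_univ_three]
        ring
    _ = 4 * (1 + √2) := by
        rw [hinner, hr, hs]
        ring

/-- The maximum of `f` over pairs of planar extremal three-outcome qubit POVM Bloch data
is `4(1+√2)`. -/
theorem stmt8 :
    IsGreatest
      {x : ℝ | ∃ (r : Fin 3 → ℝ) (u : Fin 3 → EuclideanSpace ℝ (Fin 3))
        (s : Fin 3 → ℝ) (v : Fin 3 → EuclideanSpace ℝ (Fin 3)),
        IsExtremalPOVMBloch r u ∧ IsExtremalPOVMBloch s v ∧
        (∀ j, u j 2 = 0) ∧ (∀ j, v j 2 = 0) ∧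
        x = blochF r u s v}
      (4 * (1 + Real.sqrt 2)) := by
  refine ⟨⟨![1, 1, 0], ![!₂[1, 0, 0], !₂[-1, 0, 0], !₂[1, 0, 0]],
    ![1, 1, 0], ![!₂[0, 1, 0], !₂[0, -1, 0], !₂[0, 1, 0]], ⟨?_, ?_, ?_, ?_⟩, ⟨?_, ?_, ?_, ?_⟩,
    ?_, ?_, ?_⟩, ?_⟩
  · intro j; fin_cases j <;> simp
  · intro j; fin_cases j <;> simp [EuclideanSpace.norm_eq, Fin.sum_univ_three]
  · simp [Fin.sum_univ_three, one_add_one_eq_two]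
  · ext j; fin_cases j <;> simp [Fin.sum_univ_three]
  · intro j; fin_cases j <;> simp
  · intro j; fin_cases j <;> simp [EuclideanSpace.norm_eq, Fin.sum_univ_three]
  · simp [Fin.sum_univ_three, one_add_one_eq_two]
  · ext j; fin_cases j <;> simp [Fin.sum_univ_three]
  · intro j; fin_cases j <;> simp
  · intro j; fin_cases j <;> simp
  · simp [blochF, EuclideanSpace.norm_eq, Fin.sum_univ_three]
    norm_num
    ring
  · rintro x ⟨r, u, s, v, h, k, -, -, rfl⟩
    exact blochF_le h k
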